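/- arXiv:1705.03240 — 2 statements merged into one kernel-verified Lean document; each statement's English description precedes it below -/
import Mathlib

section
/- Let z₁ ≠ z₂ and p₁, p₂, p₃ be pairwise distinct complex numbers, all five distinct, and let c ∈ ℂ*. Define R_i = c·(p_i−z₁)(p_i−z₂)·∏_{j≠i}(p_i−p_j)^{−2} for i = 1,2,3 (the quadratic residues of the quadratic differential c(z−z₁)(z−z₂)∏(z−p_i)^{−2}(dz)² on ℙ¹ at its three double poles). Then R₁, R₂, R₃ are not triangular: there do not exist complex numbers r₁, r₂, r₃ with r_i² = R_i and r₁ + r₂ + r₃ = 0. Equivalently, R₁² + R₂² + R₃² ≠ 2(R₁R₂ + R₂R₃ + R₃R₁). -/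
/-- Let `z₁ ≠ z₂` and `p₁, p₂, p₃` be five pairwise distinct complex numbers and `c ∈ ℂ*`.
The quadratic residues `R_i = c (p_i - z₁)(p_i - z₂) ∏_{j ≠ i} (p_i - p_j)^{-2}` of the
quadratic differential `c (z-z₁)(z-z₂) ∏ (z-p_i)^{-2} (dz)²` at its three double poles are
never triangular: no choice of square roots `rᵢ` of the `Rᵢ` satisfies `r₁ + r₂ + r₃ = 0`.
Equivalently `R₁² + R₂² + R₃² ≠ 2(R₁R₂ + R₂R₃ + R₃R₁)`. -/
theorem quadratic_residues_not_triangular (z₁ z₂ p₁ p₂ p₃ : ℂ)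
    (hz : z₁ ≠ z₂)
    (hz1p1 : z₁ ≠ p₁) (hz1p2 : z₁ ≠ p₂) (hz1p3 : z₁ ≠ p₃)
    (hz2p1 : z₂ ≠ p₁) (hz2p2 : z₂ ≠ p₂) (hz2p3 : z₂ ≠ p₃)
    (hp12 : p₁ ≠ p₂) (hp13 : p₁ ≠ p₃) (hp23 : p₂ ≠ p₃)
    (c : ℂ) (hc : c ≠ 0) :
    (¬ ∃ r₁ r₂ r₃ : ℂ,
        r₁ ^ 2 = c * (p₁ - z₁) * (p₁ - z₂) * ((p₁ - p₂) ^ 2)⁻¹ * ((p₁ - p₃) ^ 2)⁻¹ ∧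
        r₂ ^ 2 = c * (p₂ - z₁) * (p₂ - z₂) * ((p₂ - p₁) ^ 2)⁻¹ * ((p₂ - p₃) ^ 2)⁻¹ ∧
        r₃ ^ 2 = c * (p₃ - z₁) * (p₃ - z₂) * ((p₃ - p₁) ^ 2)⁻¹ * ((p₃ - p₂) ^ 2)⁻¹ ∧
        r₁ + r₂ + r₃ = 0) ∧
    (c * (p₁ - z₁) * (p₁ - z₂) * ((p₁ - p₂) ^ 2)⁻¹ * ((p₁ - p₃) ^ 2)⁻¹) ^ 2 +
        (c * (p₂ - z₁) * (p₂ - z₂) * ((p₂ - p₁) ^ 2)⁻¹ * ((p₂ - p₃) ^ 2)⁻¹) ^ 2 +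
        (c * (p₃ - z₁) * (p₃ - z₂) * ((p₃ - p₁) ^ 2)⁻¹ * ((p₃ - p₂) ^ 2)⁻¹) ^ 2 ≠
      2 * ((c * (p₁ - z₁) * (p₁ - z₂) * ((p₁ - p₂) ^ 2)⁻¹ * ((p₁ - p₃) ^ 2)⁻¹) *
            (c * (p₂ - z₁) * (p₂ - z₂) * ((p₂ - p₁) ^ 2)⁻¹ * ((p₂ - p₃) ^ 2)⁻¹) +
          (c * (p₂ - z₁) * (p₂ - z₂) * ((p₂ - p₁) ^ 2)⁻¹ * ((p₂ - p₃) ^ 2)⁻¹) *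
            (c * (p₃ - z₁) * (p₃ - z₂) * ((p₃ - p₁) ^ 2)⁻¹ * ((p₃ - p₂) ^ 2)⁻¹) +
          (c * (p₃ - z₁) * (p₃ - z₂) * ((p₃ - p₁) ^ 2)⁻¹ * ((p₃ - p₂) ^ 2)⁻¹) *
            (c * (p₁ - z₁) * (p₁ - z₂) * ((p₁ - p₂) ^ 2)⁻¹ * ((p₁ - p₃) ^ 2)⁻¹)) := by
  have h12 : p₁ - p₂ ≠ 0 := sub_ne_zero.mpr hp12
  have h13 : p₁ - p₃ ≠ 0 := sub_ne_zero.mpr hp13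
  have h23 : p₂ - p₃ ≠ 0 := sub_ne_zero.mpr hp23
  have hzz : z₁ - z₂ ≠ 0 := sub_ne_zero.mpr hz
  -- the triangular form is the discriminant of the numerator, up to a nonzero factor
  have key : (c * (p₁ - z₁) * (p₁ - z₂) * ((p₁ - p₂) ^ 2)⁻¹ * ((p₁ - p₃) ^ 2)⁻¹) ^ 2 +
        (c * (p₂ - z₁) * (p₂ - z₂) * ((p₂ - p₁) ^ 2)⁻¹ * ((p₂ - p₃) ^ 2)⁻¹) ^ 2 +
        (c * (p₃ - z₁) * (p₃ - z₂) * ((p₃ - p₁) ^ 2)⁻¹ * ((p₃ - p₂) ^ 2)⁻¹) ^ 2 -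
      2 * ((c * (p₁ - z₁) * (p₁ - z₂) * ((p₁ - p₂) ^ 2)⁻¹ * ((p₁ - p₃) ^ 2)⁻¹) *
            (c * (p₂ - z₁) * (p₂ - z₂) * ((p₂ - p₁) ^ 2)⁻¹ * ((p₂ - p₃) ^ 2)⁻¹) +
          (c * (p₂ - z₁) * (p₂ - z₂) * ((p₂ - p₁) ^ 2)⁻¹ * ((p₂ - p₃) ^ 2)⁻¹) *
            (c * (p₃ - z₁) * (p₃ - z₂) * ((p₃ - p₁) ^ 2)⁻¹ * ((p₃ - p₂) ^ 2)⁻¹) +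
          (c * (p₃ - z₁) * (p₃ - z₂) * ((p₃ - p₁) ^ 2)⁻¹ * ((p₃ - p₂) ^ 2)⁻¹) *
            (c * (p₁ - z₁) * (p₁ - z₂) * ((p₁ - p₂) ^ 2)⁻¹ * ((p₁ - p₃) ^ 2)⁻¹)) =
      (c * (z₁ - z₂) / ((p₁ - p₂) * (p₁ - p₃) * (p₂ - p₃))) ^ 2 := by
    rw [← neg_sub p₁ p₂, ← neg_sub p₁ p₃, ← neg_sub p₂ p₃]
    simp only [neg_sq]
    field_simp
    ring
  have hne : (c * (z₁ - z₂) / ((p₁ - p₂) * (p₁ - p₃) * (p₂ - p₃))) ^ 2 ≠ 0 :=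
    pow_ne_zero _ (div_ne_zero (mul_ne_zero hc hzz) (mul_ne_zero (mul_ne_zero h12 h13) h23))
  constructor
  · rintro ⟨r₁, r₂, r₃, e₁, e₂, e₃, h⟩
    rw [← e₁, ← e₂, ← e₃] at key
    apply hne
    rw [← key]
    have h3 : r₃ = -r₁ - r₂ := by linear_combination h
    subst h3
    ring
  · intro h
    exact hne (by rw [← key]; exact sub_eq_zero.mpr h)
end

section
/- Let x₁, …, x_a and y₁, …, y_b be strictly positive integers with gcd(x₁,…,x_a,y₁,…,y_b) = 1 and ∑_{i=1}^{a} x_i = ∑_{j=1}^{b} y_j. If there is no connection graph with the x_i as weights on one side and the y_j as weights on the other, then ∑_{i=1}^{a} x_i ≤ a·b/2. -/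
/-- One step of the leaf-removal operation on a weighted graph state.  A state is a pair
`(s, w)` of the set of remaining vertices and the current weight function.  A step removes a
leaf `v` of the graph induced on `s` (a vertex with a unique neighbour `u` in `s`) and
subtracts the weight of `v` from that of `u`. -/
def LeafStep {V : Type} [DecidableEq V] (G : SimpleGraph V) :
    Finset V × (V → ℝ) → Finset V × (V → ℝ) → Prop := fun st st' =>
  ∃ v ∈ st.1, ∃ u ∈ st.1, u ≠ v ∧ G.Adj v u ∧ (∀ x ∈ st.1, G.Adj v x → x = u) ∧
    st'.1 = st.1.erase v ∧ st'.2 = Function.update st.2 u (st.2 u - st.2 v)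

/-- `ReachN G n st st'` : the state `st'` is obtained from `st` by exactly `n` leaf-removal
steps. -/
def ReachN {V : Type} [DecidableEq V] (G : SimpleGraph V) :
    ℕ → Finset V × (V → ℝ) → Finset V × (V → ℝ) → Prop
  | 0, st, st' => st' = st
  | n + 1, st, st' => ∃ m, LeafStep G st m ∧ ReachN G n m st'

/-- A connection graph with weights `x : Fin a → ℝ` on the positive side and
`y : Fin b → ℝ` on the negative side: a bipartite tree on `Fin a ⊕ Fin b` with strictly
positive weights whose two sides have equal total weight, and such that applying between `1`
and (#edges − 1) = `a + b - 2` leaf-removal steps always leaves all remaining weights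
strictly positive. -/
def IsConnectionGraph {a b : ℕ} (G : SimpleGraph (Fin a ⊕ Fin b))
    (x : Fin a → ℝ) (y : Fin b → ℝ) : Prop :=
  G.IsTree ∧
  (∀ i j, ¬ G.Adj (Sum.inl i) (Sum.inl j)) ∧
  (∀ i j, ¬ G.Adj (Sum.inr i) (Sum.inr j)) ∧
  (∀ i, 0 < x i) ∧ (∀ j, 0 < y j) ∧
  (∑ i, x i = ∑ j, y j) ∧
  (∀ n : ℕ, 1 ≤ n → n ≤ a + b - 2 →
    ∀ st, ReachN G n (Finset.univ, Sum.elim x y) st → ∀ v ∈ st.1, 0 < st.2 v)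

/-- The support graph of a nonnegative integer matrix. -/
def suppG {a b : ℕ} (f : Fin a → Fin b → ℕ) : SimpleGraph (Fin a ⊕ Fin b) where
  Adj u v := (∃ i j, u = Sum.inl i ∧ v = Sum.inr j ∧ 0 < f i j) ∨
    (∃ i j, v = Sum.inl i ∧ u = Sum.inr j ∧ 0 < f i j)
  symm := ⟨by rintro u v (h | h); exacts [Or.inr h, Or.inl h]⟩
  loopless := ⟨by
    rintro u (⟨i, j, h, h', _⟩ | ⟨i, j, h, h', _⟩) <;> exact absurd (h.symm.trans h') (by simp)⟩

@[simp] theorem suppG_lr {a b : ℕ} (f : Fin a → Fin b → ℕ) (i : Fin a) (j : Fin b) :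
    (suppG f).Adj (Sum.inl i) (Sum.inr j) ↔ 0 < f i j := by
  simp [suppG]

@[simp] theorem suppG_rl {a b : ℕ} (f : Fin a → Fin b → ℕ) (i : Fin a) (j : Fin b) :
    (suppG f).Adj (Sum.inr j) (Sum.inl i) ↔ 0 < f i j := by
  simp [suppG]

@[simp] theorem suppG_ll {a b : ℕ} (f : Fin a → Fin b → ℕ) (i i' : Fin a) :
    ¬ (suppG f).Adj (Sum.inl i) (Sum.inl i') := by
  simp [suppG]

@[simp] theorem suppG_rr {a b : ℕ} (f : Fin a → Fin b → ℕ) (j j' : Fin b) :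
    ¬ (suppG f).Adj (Sum.inr j) (Sum.inr j') := by
  simp [suppG]

theorem reach_closed {V : Type*} {G : SimpleGraph V} {S : Set V}
    (hS : ∀ u v, G.Adj u v → u ∈ S → v ∈ S) {u v : V} (h : G.Reachable u v) (hu : u ∈ S) :
    v ∈ S := by
  obtain ⟨p⟩ := h
  induction p with
  | nil => exact hu
  | cons h p ih => exact ih (hS _ _ h hu)

/-- A forest-supported transportation matrix exists. -/
theorem exists_forest {a b : ℕ} (n : ℕ) : ∀ (x : Fin a → ℕ) (y : Fin b → ℕ),
    ∑ i, x i = n → ∑ j, y j = n →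
    ∃ f : Fin a → Fin b → ℕ, (∀ i, ∑ j, f i j = x i) ∧ (∀ j, ∑ i, f i j = y j) ∧
      (suppG f).IsAcyclic := by
  induction n using Nat.strong_induction_on with
  | _ n ih =>
  intro x y hx hy
  rcases Nat.eq_zero_or_pos n with rfl | hn
  · refine ⟨fun _ _ => 0, ?_, ?_, ?_⟩
    · intro i
      simp at hx
      simp [hx i]
    · intro j
      simp at hy
      simp [hy j]
    · have : suppG (fun (_ : Fin a) (_ : Fin b) => 0) = ⊥ := by
        ext u v
        simp [suppG]
      rw [this]
      exact SimpleGraph.isAcyclic_bot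
  · obtain ⟨i, hi⟩ : ∃ i, 0 < x i := by
      by_contra! h
      have : ∑ i, x i = 0 := Finset.sum_eq_zero (fun i _ => Nat.le_zero.mp (h i))
      omega
    obtain ⟨j, hj⟩ : ∃ j, 0 < y j := by
      by_contra! h
      have : ∑ i, y i = 0 := Finset.sum_eq_zero (fun i _ => Nat.le_zero.mp (h i))
      omega
    set m := min (x i) (y j) with hm
    have hm0 : 0 < m := lt_min hi hj
    have hmx : m ≤ x i := min_le_left _ _
    have hmy : m ≤ y j := min_le_right _ _
    have hx' : ∀ k, x k = Function.update x i (x i - m) k + if k = i then m else 0 := by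
      intro k
      by_cases hk : k = i
      · subst hk; simp; omega
      · simp [hk]
    have hy' : ∀ k, y k = Function.update y j (y j - m) k + if k = j then m else 0 := by
      intro k
      by_cases hk : k = j
      · subst hk; simp; omega
      · simp [hk]
    have sx : ∑ k, x k = ∑ k, Function.update x i (x i - m) k + m := by
      rw [Finset.sum_congr rfl (fun k _ => hx' k), Finset.sum_add_distrib]
      simp
    have sy : ∑ k, y k = ∑ k, Function.update y j (y j - m) k + m := by
      rw [Finset.sum_congr rfl (fun k _ => hy' k), Finset.sum_add_distrib]
      simp
    obtain ⟨f, f1, f2, f3⟩ := ih (n - m) (by omega) (Function.update x i (x i - m))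
      (Function.update y j (y j - m)) (by omega) (by omega)
    refine ⟨fun k l => f k l + if k = i ∧ l = j then m else 0, ?_, ?_, ?_⟩
    · intro k
      rw [Finset.sum_add_distrib, f1, hx' k]
      by_cases hk : k = i <;> simp [hk]
    · intro k
      rw [Finset.sum_add_distrib, f2, hy' k]
      by_cases hk : k = j <;> simp [hk]
    · have hG : suppG (fun k l => f k l + if k = i ∧ l = j then m else 0) =
          suppG f ⊔ SimpleGraph.edge (Sum.inl i) (Sum.inr j) := by
        ext u v
        rcases u with u | u <;> rcases v with v | v <;>
          simp [SimpleGraph.edge_adj] <;> grind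
      rw [hG]
      refine SimpleGraph.IsAcyclic.sup_edge_of_not_reachable ?_ f3
      intro hr
      rcases le_total (x i) (y j) with h | h
      · have h0 : ∀ l, f i l = 0 := by
          have := f1 i
          rw [Function.update_self, hm, min_eq_left h, Nat.sub_self] at this
          simpa using this
        have := reach_closed (S := {Sum.inl i}) (by
          rintro u v huv rfl
          rcases v with v | v
          · simp at huv
          · simp [h0] at huv) hr rfl
        simp at this
      · have h0 : ∀ l, f l j = 0 := by
          have := f2 j
          rw [Function.update_self, hm, min_eq_right h, Nat.sub_self] at this
          simpa using this
        have := reach_closed (S := {Sum.inr j}) (by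
          rintro u v huv rfl
          rcases v with v | v
          · simp [h0] at huv
          · simp at huv) hr.symm rfl
        simp at this

/-- Graph part of the merging move. -/
theorem merge_acyclic {V : Type*} [DecidableEq V] {G : SimpleGraph V} (hG : G.IsAcyclic)
    {i j i' j' : V} (hij : G.Adj i j) (hij' : G.Adj i' j') (hr : ¬ G.Reachable i i') :
    (G.deleteEdges {s(i, j)} ⊔ SimpleGraph.edge i j' ⊔ SimpleGraph.edge i' j).IsAcyclic := by
  set H := G.deleteEdges {s(i, j)} with hH
  have hle : H ≤ G := SimpleGraph.deleteEdges_le _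
  have hHa : H.IsAcyclic := hG.anti hle
  have hbr : ¬ H.Reachable i j :=
    SimpleGraph.isAcyclic_iff_forall_adj_isBridge.mp hG hij
  have h1 : ¬ H.Reachable i j' := fun h => hr ((h.mono hle).trans hij'.symm.reachable)
  have h2 : (H ⊔ SimpleGraph.edge i j').IsAcyclic := hHa.sup_edge_of_not_reachable h1
  refine h2.sup_edge_of_not_reachable ?_
  intro h
  have := reach_closed (S := {w | H.Reachable j w}) (by
    rintro u v huv hu
    simp only [SimpleGraph.sup_adj, SimpleGraph.edge_adj] at huv
    simp only [Set.mem_ofPred_eq] at hu ⊢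
    rcases huv with huv | ⟨⟨rfl, rfl⟩ | ⟨rfl, rfl⟩, _⟩
    · exact hu.trans huv.reachable
    · exact absurd hu.symm hbr
    · exact absurd (hij.reachable.trans ((hu.mono hle).trans hij'.symm.reachable)) hr)
    h.symm (SimpleGraph.Reachable.refl j)
  exact hr (hij.reachable.trans (SimpleGraph.Reachable.mono hle this))

/-- Merging move on matrices. -/
theorem merge_matrix {a b : ℕ} {x : Fin a → ℕ} {y : Fin b → ℕ} (f : Fin a → Fin b → ℕ)
    (f1 : ∀ i, ∑ j, f i j = x i) (f2 : ∀ j, ∑ i, f i j = y j) (f3 : (suppG f).IsAcyclic)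
    {i i' : Fin a} {j j' : Fin b} (hij : 0 < f i j) (hlt : f i j < f i' j')
    (hr : ¬ (suppG f).Reachable (Sum.inl i) (Sum.inl i')) :
    ∃ g : Fin a → Fin b → ℕ, (∀ i, ∑ j, g i j = x i) ∧ (∀ j, ∑ i, g i j = y j) ∧
      (suppG g).IsAcyclic ∧
      (Finset.univ.filter (fun q : Fin a × Fin b => 0 < f q.1 q.2)).card <
      (Finset.univ.filter (fun q : Fin a × Fin b => 0 < g q.1 q.2)).card := by
  have a1 : (suppG f).Adj (Sum.inl i) (Sum.inr j) := by simpa using hij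
  have a2 : (suppG f).Adj (Sum.inl i') (Sum.inr j') := by simp; omega
  have hi : i ≠ i' := by rintro rfl; exact hr (SimpleGraph.Reachable.refl _)
  have hj : j ≠ j' := by
    rintro rfl; exact hr (a1.reachable.trans a2.symm.reachable)
  have z1 : f i j' = 0 := by
    by_contra h
    have a3 : (suppG f).Adj (Sum.inl i) (Sum.inr j') := by simp; omega
    exact hr (a3.reachable.trans a2.symm.reachable)
  have z2 : f i' j = 0 := by
    by_contra h
    have a3 : (suppG f).Adj (Sum.inl i') (Sum.inr j) := by simp; omega
    exact hr (a1.reachable.trans a3.symm.reachable)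
  obtain ⟨g, hg⟩ : ∃ g : Fin a → Fin b → ℕ, g = fun k l =>
    if k = i then (if l = j then 0 else if l = j' then f i j else f k l)
    else if k = i' then (if l = j then f i j else if l = j' then f i' j' - f i j else f k l)
    else f k l := ⟨_, rfl⟩
  have hgz : ∀ k l, (g k l : ℤ) = f k l + (f i j : ℤ) *
      ((if k = i' then 1 else 0) - (if k = i then 1 else 0)) *
      ((if l = j then 1 else 0) - (if l = j' then 1 else 0)) := by
    intro k l
    rw [hg]
    by_cases h1 : k = i
    · subst h1
      by_cases h2 : l = j
      · subst h2; simp [hi, hj]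
      · by_cases h3 : l = j'
        · subst h3; simp [hi, hj.symm, z1]
        · simp [h2, h3]
    · by_cases h4 : k = i'
      · subst h4
        by_cases h2 : l = j
        · subst h2; simp [hi.symm, hj, z2]
        · by_cases h3 : l = j'
          · subst h3; simp [hi.symm, hj.symm]; omega
          · simp [h2, h3, h1]
      · simp [h1, h4]
  have hpos : ∀ k l, 0 < g k l ↔ ((0 < f k l ∧ ¬ (k = i ∧ l = j)) ∨ (k = i ∧ l = j')) ∨
      (k = i' ∧ l = j) := by
    intro k l
    rw [hg]
    grind
  refine ⟨g, ?_, ?_, ?_, ?_⟩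
  · intro k
    zify
    simp_rw [hgz]
    rw [Finset.sum_add_distrib, ← Finset.mul_sum, Finset.sum_sub_distrib]
    simp [← f1]
  · intro l
    zify
    simp_rw [hgz]
    rw [Finset.sum_add_distrib, ← Finset.sum_mul, ← Finset.mul_sum, Finset.sum_sub_distrib]
    simp [← f2]
  · have := merge_acyclic f3 a1 a2 hr
    convert this using 1
    ext u v
    rcases u with u | u <;> rcases v with v | v <;>
      simp [SimpleGraph.edge_adj, hpos] <;> grind
  · have e : Finset.univ.filter (fun q : Fin a × Fin b => 0 < g q.1 q.2) =
        insert (i', j) (insert (i, j')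
          ((Finset.univ.filter (fun q : Fin a × Fin b => 0 < f q.1 q.2)).erase (i, j))) := by
      ext ⟨k, l⟩
      simp [hpos]
      grind
    rw [e, Finset.card_insert_of_notMem (by simp [hi.symm, hj, z2]),
      Finset.card_insert_of_notMem (by simp [z1]), Finset.card_erase_of_mem (by simpa using hij)]
    omega

/-- An acyclic disconnected support has at most `a + b - 2` entries. -/
theorem card_supp_le {a b : ℕ} (f : Fin a → Fin b → ℕ) (hf : (suppG f).IsAcyclic)
    {u v : Fin a ⊕ Fin b} (hr : ¬ (suppG f).Reachable u v) :
    (Finset.univ.filter (fun q : Fin a × Fin b => 0 < f q.1 q.2)).card + 2 ≤ a + b := by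
  classical
  obtain ⟨T, hGT, hT⟩ := SimpleGraph.exists_maximal_isAcyclic_of_le_isAcyclic
    (G := (⊤ : SimpleGraph (Fin a ⊕ Fin b))) le_top hf
  have : Nonempty (Fin a ⊕ Fin b) := ⟨u⟩
  have hTt : T.IsTree :=
    (SimpleGraph.connected_top.maximal_le_isAcyclic_iff_isTree le_top).mp hT
  have hlt : suppG f < T := lt_of_le_of_ne hGT (by
    rintro rfl
    exact hr (hTt.connected.preconnected u v))
  have hc := hTt.card_edgeFinset
  have hs : (suppG f).edgeFinset.card < T.edgeFinset.card :=
    Finset.card_lt_card (SimpleGraph.edgeFinset_ssubset_edgeFinset.mpr hlt)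
  have hi : (Finset.univ.filter (fun q : Fin a × Fin b => 0 < f q.1 q.2)).card ≤
      (suppG f).edgeFinset.card := by
    refine Finset.card_le_card_of_injOn (fun q => s(Sum.inl q.1, Sum.inr q.2)) ?_ ?_
    · intro q hq
      simpa using hq
    · rintro ⟨k, l⟩ _ ⟨k', l'⟩ _ h
      simpa using h
  simp at hc
  omega

/-- Symmetric real weight function of a matrix. -/
def symW {a b : ℕ} (f : Fin a → Fin b → ℕ) : Fin a ⊕ Fin b → Fin a ⊕ Fin b → ℝ
  | Sum.inl i, Sum.inr j => f i j
  | Sum.inr j, Sum.inl i => f i j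
  | _, _ => 0

/-- Invariant of the leaf-removal process. -/
def LeafInv {a b : ℕ} (f : Fin a → Fin b → ℕ)
    (st : Finset (Fin a ⊕ Fin b) × (Fin a ⊕ Fin b → ℝ)) : Prop :=
  (∀ v ∈ st.1, st.2 v = ∑ u ∈ st.1, symW f v u) ∧
  (∀ t : Finset (Fin a ⊕ Fin b), t ⊆ st.1 → t.Nonempty → t ≠ st.1 →
    ∃ u ∈ t, ∃ v ∈ st.1, v ∉ t ∧ (suppG f).Adj u v)

theorem symW_comm {a b : ℕ} (f : Fin a → Fin b → ℕ) (u v : Fin a ⊕ Fin b) :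
    symW f u v = symW f v u := by
  rcases u with u | u <;> rcases v with v | v <;> simp [symW]

theorem symW_nonneg {a b : ℕ} (f : Fin a → Fin b → ℕ) (u v : Fin a ⊕ Fin b) :
    0 ≤ symW f u v := by
  rcases u with u | u <;> rcases v with v | v <;> simp [symW]

theorem symW_pos {a b : ℕ} (f : Fin a → Fin b → ℕ) (u v : Fin a ⊕ Fin b) :
    0 < symW f u v ↔ (suppG f).Adj u v := by
  rcases u with u | u <;> rcases v with v | v <;> simp [symW]

theorem symW_zero {a b : ℕ} (f : Fin a → Fin b → ℕ) {u v : Fin a ⊕ Fin b}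
    (h : ¬ (suppG f).Adj u v) : symW f u v = 0 :=
  le_antisymm (not_lt.mp (fun h' => h ((symW_pos f u v).mp h'))) (symW_nonneg f u v)

theorem inv_step {a b : ℕ} (f : Fin a → Fin b → ℕ)
    {st st' : Finset (Fin a ⊕ Fin b) × (Fin a ⊕ Fin b → ℝ)} (h : LeafInv f st)
    (hs : LeafStep (suppG f) st st') : LeafInv f st' ∧ st'.1.card + 1 = st.1.card := by
  obtain ⟨s, w⟩ := st
  obtain ⟨s', w'⟩ := st'
  obtain ⟨v, hv, u, hu, huv, hadj, huniq, h1, h2⟩ := hs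
  obtain ⟨hw, hcut⟩ := h
  simp only at *
  subst h1 h2
  refine ⟨⟨?_, ?_⟩, Finset.card_erase_add_one hv⟩
  · intro z hz
    simp only at hz ⊢
    obtain ⟨hzv, hzs⟩ := Finset.mem_erase.mp hz
    have e1 : ∑ k ∈ s, symW f z k = ∑ k ∈ s.erase v, symW f z k + symW f z v :=
      (Finset.sum_erase_add _ _ hv).symm
    by_cases hzu : z = u
    · subst hzu
      have e2 : w v = symW f v z := by
        rw [hw v hv]
        refine Finset.sum_eq_single_of_mem z hu ?_
        intro k hk hkz
        exact symW_zero f (fun hh => hkz (huniq k hk hh))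
      rw [Function.update_self, hw z hzs, e1, e2, symW_comm f v z]
      ring
    · rw [Function.update_of_ne hzu, hw z hzs, e1,
        symW_zero f (fun hh => hzu (huniq z hzs hh.symm)), add_zero]
  · intro t ht hne hneq
    simp only at ht hneq ⊢
    have hvt : v ∉ t := fun h => by simpa using ht h
    have hts : t ⊆ s := ht.trans (Finset.erase_subset _ _)
    by_cases hut : u ∈ t
    · obtain ⟨p, hp, q, hq, hqt, hpq⟩ := hcut (insert v t)
        (Finset.insert_subset hv hts) (Finset.insert_nonempty _ _) (by
          intro h
          apply hneq
          rw [← h, Finset.erase_insert hvt])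
      rw [Finset.mem_insert, not_or] at hqt
      rcases Finset.mem_insert.mp hp with rfl | hp
      · exact absurd (huniq q hq hpq ▸ hut) hqt.2
      · exact ⟨p, hp, q, Finset.mem_erase.mpr ⟨hqt.1, hq⟩, hqt.2, hpq⟩
    · obtain ⟨p, hp, q, hq, hqt, hpq⟩ := hcut t hts hne (by
        rintro rfl; exact hvt hv)
      refine ⟨p, hp, q, Finset.mem_erase.mpr ⟨?_, hq⟩, hqt, hpq⟩
      rintro rfl
      exact hut (huniq p (hts hp) hpq.symm ▸ hp)

theorem inv_reach {a b : ℕ} (f : Fin a → Fin b → ℕ) (n : ℕ) :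
    ∀ {st st' : Finset (Fin a ⊕ Fin b) × (Fin a ⊕ Fin b → ℝ)}, LeafInv f st →
    ReachN (suppG f) n st st' → LeafInv f st' ∧ st'.1.card + n = st.1.card := by
  induction n with
  | zero =>
    intro st st' h hr
    have : st' = st := hr
    subst this
    exact ⟨h, rfl⟩
  | succ n ih =>
    intro st st' h hr
    obtain ⟨m, hm, hr⟩ := hr
    obtain ⟨h1, h2⟩ := inv_step f h hm
    obtain ⟨h3, h4⟩ := ih h1 hr
    exact ⟨h3, by omega⟩

theorem connection_of_tree {a b : ℕ} {x : Fin a → ℕ} {y : Fin b → ℕ}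
    (hx : ∀ i, 0 < x i) (hy : ∀ j, 0 < y j) (hsum : ∑ i, x i = ∑ j, y j)
    (f : Fin a → Fin b → ℕ)
    (f1 : ∀ i, ∑ j, f i j = x i) (f2 : ∀ j, ∑ i, f i j = y j) (hf : (suppG f).IsTree)
    (hab : 2 ≤ a + b) :
    IsConnectionGraph (suppG f) (fun i => (x i : ℝ)) (fun j => (y j : ℝ)) := by
  refine ⟨hf, suppG_ll f, suppG_rr f, fun i => Nat.cast_pos.mpr (hx i),
    fun j => Nat.cast_pos.mpr (hy j), by
      beta_reduce; exact_mod_cast hsum, ?_⟩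
  intro n _ hn st hst v hv
  have h0 : LeafInv f (Finset.univ, Sum.elim (fun i => (x i : ℝ)) (fun j => (y j : ℝ))) := by
    constructor
    · rintro (i | j) _
      · simp [symW, ← f1]
      · simp [symW, ← f2]
    · intro t _ hne hneq
      by_contra! hcon
      obtain ⟨p, hp⟩ := hne
      apply hneq
      rw [Finset.eq_univ_iff_forall]
      intro q
      have := reach_closed (S := (t : Set (Fin a ⊕ Fin b))) (by
        intro u v huv hu
        by_contra hvt
        exact hcon u hu v (Finset.mem_univ _) hvt huv) (hf.connected.preconnected p q) hp
      exact this
  obtain ⟨⟨h1, h2⟩, h3⟩ := inv_reach f n h0 hst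
  simp at h3
  obtain ⟨p, hp, q, hq, _, hpq⟩ := h2 {v} (by simpa using hv) (by simp) (by
    intro h
    rw [← h] at h3
    simp at h3
    omega)
  rw [Finset.mem_singleton] at hp
  subst hp
  rw [h1 p hv]
  exact lt_of_lt_of_le ((symW_pos f p q).mpr hpq)
    (Finset.single_le_sum (f := fun u => symW f p u) (fun u _ => symW_nonneg f p u) hq)

/-- If `x₁,…,x_a` and `y₁,…,y_b` are strictly positive integers with overall gcd `1` and
equal sums, and there is no connection graph with the `x_i` on one side and the `y_j` on the
other, then `∑ x_i ≤ a·b/2`. -/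
theorem sum_le_of_no_connection_graph (a b : ℕ) (x : Fin a → ℕ) (y : Fin b → ℕ)
    (hx : ∀ i, 0 < x i) (hy : ∀ j, 0 < y j)
    (hgcd : Nat.gcd (Finset.univ.gcd x) (Finset.univ.gcd y) = 1)
    (hsum : ∑ i, x i = ∑ j, y j)
    (hno : ¬ ∃ G : SimpleGraph (Fin a ⊕ Fin b),
        IsConnectionGraph G (fun i => (x i : ℝ)) (fun j => (y j : ℝ))) :
    2 * ∑ i, x i ≤ a * b := by
  classical
  rcases Nat.eq_zero_or_pos a with rfl | ha
  · simp
  -- choose a forest-supported matrix with support of maximal size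
  obtain ⟨f, ⟨f1, f2, f3⟩, hmax⟩ : ∃ f : Fin a → Fin b → ℕ,
      ((∀ i, ∑ j, f i j = x i) ∧ (∀ j, ∑ i, f i j = y j) ∧ (suppG f).IsAcyclic) ∧
      ∀ g : Fin a → Fin b → ℕ,
      ((∀ i, ∑ j, g i j = x i) ∧ (∀ j, ∑ i, g i j = y j) ∧ (suppG g).IsAcyclic) →
      (Finset.univ.filter (fun q : Fin a × Fin b => 0 < g q.1 q.2)).card ≤
      (Finset.univ.filter (fun q : Fin a × Fin b => 0 < f q.1 q.2)).card := by
    obtain ⟨f0, h0⟩ := exists_forest _ x y rfl hsum.symm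
    by_contra! hcon
    have : ∀ n : ℕ, ∃ f : Fin a → Fin b → ℕ,
        ((∀ i, ∑ j, f i j = x i) ∧ (∀ j, ∑ i, f i j = y j) ∧ (suppG f).IsAcyclic) ∧
        n ≤ (Finset.univ.filter (fun q : Fin a × Fin b => 0 < f q.1 q.2)).card := by
      intro n
      induction n with
      | zero => exact ⟨f0, h0, Nat.zero_le _⟩
      | succ n ih =>
        obtain ⟨f, hf, hn⟩ := ih
        obtain ⟨g, hg, hlt⟩ := hcon f hf
        exact ⟨g, hg, by omega⟩
    obtain ⟨f, _, hf⟩ := this (Fintype.card (Fin a × Fin b) + 1)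
    have := Finset.card_le_univ (Finset.univ.filter (fun q : Fin a × Fin b => 0 < f q.1 q.2))
    omega
  have key : ∀ i i' j j', 0 < f i j → 0 < f i' j' →
      ¬ (suppG f).Reachable (Sum.inl i) (Sum.inl i') → f i j = f i' j' := by
    intro i i' j j' h h' hr
    rcases lt_trichotomy (f i j) (f i' j') with hlt | heq | hlt
    · obtain ⟨g, g1, g2, g3, g4⟩ := merge_matrix f f1 f2 f3 h hlt hr
      exact absurd (hmax g ⟨g1, g2, g3⟩) (by omega)
    · exact heq
    · obtain ⟨g, g1, g2, g3, g4⟩ := merge_matrix f f1 f2 f3 h' hlt (fun h => hr h.symm)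
      exact absurd (hmax g ⟨g1, g2, g3⟩) (by omega)
  have rowpos : ∀ i, ∃ j, 0 < f i j := by
    intro i
    by_contra! h
    have : ∑ j, f i j = 0 := Finset.sum_eq_zero (fun j _ => Nat.le_zero.mp (h j))
    have := f1 i
    have := hx i
    omega
  have colpos : ∀ j, ∃ i, 0 < f i j := by
    intro j
    by_contra! h
    have : ∑ i, f i j = 0 := Finset.sum_eq_zero (fun j _ => Nat.le_zero.mp (h j))
    have := f2 j
    have := hy j
    omega
  have hb : 0 < b := by
    obtain ⟨j, _⟩ := rowpos ⟨0, ha⟩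
    exact j.pos
  by_cases hall : ∀ i i', (suppG f).Reachable (Sum.inl i) (Sum.inl i')
  · exfalso
    apply hno
    refine ⟨suppG f, connection_of_tree hx hy hsum f f1 f2 ⟨?_, f3⟩ (by omega)⟩
    have hl : ∀ u, ∃ i, (suppG f).Reachable u (Sum.inl i) := by
      rintro (i | j)
      · exact ⟨i, SimpleGraph.Reachable.refl _⟩
      · obtain ⟨i, hi⟩ := colpos j
        exact ⟨i, SimpleGraph.Adj.reachable (by simpa using hi)⟩
    have : Nonempty (Fin a ⊕ Fin b) := ⟨Sum.inl ⟨0, ha⟩⟩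
    refine ⟨?_⟩
    intro u v
    obtain ⟨i, hi⟩ := hl u
    obtain ⟨i', hi'⟩ := hl v
    exact hi.trans ((hall i i').trans hi'.symm)
  · push Not at hall
    obtain ⟨i, i', hr⟩ := hall
    obtain ⟨j, hj⟩ := rowpos i
    obtain ⟨j', hj'⟩ := rowpos i'
    have hval : ∀ k l, 0 < f k l → f k l = f i j := by
      intro k l hkl
      by_cases hk : (suppG f).Reachable (Sum.inl k) (Sum.inl i)
      · rw [key i i' j j' hj hj' hr]
        exact key k i' l j' hkl hj' (fun h => hr (hk.symm.trans h))
      · exact key k i l j hkl hj hk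
    have hdiv : ∀ k l, f i j ∣ f k l := by
      intro k l
      rcases Nat.eq_zero_or_pos (f k l) with h | h
      · rw [h]; exact dvd_zero _
      · rw [hval k l h]
    have hp1 : f i j = 1 := by
      apply Nat.dvd_one.mp
      rw [← hgcd]
      refine Nat.dvd_gcd (Finset.dvd_gcd ?_) (Finset.dvd_gcd ?_)
      · intro k _
        rw [← f1 k]
        exact Finset.dvd_sum (fun l _ => hdiv k l)
      · intro l _
        rw [← f2 l]
        exact Finset.dvd_sum (fun k _ => hdiv k l)
    have hN : ∑ k, x k = (Finset.univ.filter (fun q : Fin a × Fin b => 0 < f q.1 q.2)).card := by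
      rw [Finset.card_filter, Fintype.sum_prod_type]
      refine Finset.sum_congr rfl (fun k _ => ?_)
      rw [← f1 k]
      refine Finset.sum_congr rfl (fun l _ => ?_)
      split_ifs with h
      · exact (hval k l h).trans hp1
      · exact Nat.eq_zero_of_not_pos h
    have hc := card_supp_le f f3 hr
    have hii : i ≠ i' := by rintro rfl; exact hr (SimpleGraph.Reachable.refl _)
    have hjj : j ≠ j' := by
      rintro rfl
      have a1 : (suppG f).Adj (Sum.inl i) (Sum.inr j) := by simpa using hj
      have a2 : (suppG f).Adj (Sum.inl i') (Sum.inr j) := by simpa using hj'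
      exact hr (a1.reachable.trans a2.symm.reachable)
    have ha2 : 2 ≤ a := by
      by_contra h
      exact hii (Fin.ext (by omega))
    have hb2 : 2 ≤ b := by
      by_contra h
      exact hjj (Fin.ext (by omega))
    rw [hN]
    nlinarith [Nat.mul_le_mul ha2 hb2, mul_nonneg (sub_nonneg.mpr (by exact_mod_cast ha2 : (2:ℤ) ≤ a)) (sub_nonneg.mpr (by exact_mod_cast hb2 : (2:ℤ) ≤ b))]
end
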